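/- There are no finite chiral n-polytopes that are (1, n−3)-flat, and there are no finite chiral n-polytopes that are (2, n−2)-flat. -/

import Mathlib

open scoped Classical

/-- An abstract polytope of rank `n`: a partially ordered set with a unique minimal
element (of rank `-1`) and a unique maximal element (of rank `n`), all of whose
maximal chains (flags) have exactly `n + 2` elements, equipped with the induced
rank function, satisfying the diamond condition and strong connectivity. -/
structure AbstractPolytope (n : ℕ) where
  Face : Type
  [instPartialOrder : PartialOrder Face]
  rank : Face → ℤ
  bot : Face
  top : Face
  bot_le : ∀ F : Face, bot ≤ F
  le_top : ∀ F : Face, F ≤ top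
  rank_bot : rank bot = -1
  rank_top : rank top = n
  rank_strictMono : ∀ F G : Face, F < G → rank F < rank G
  flag_card : ∀ Φ : Flag Face, Nat.card Φ = n + 2
  flag_ranks : ∀ (Φ : Flag Face) (j : ℤ), -1 ≤ j → j ≤ (n : ℤ) →
    ∃ F ∈ Φ, rank F = j
  diamond : ∀ F G : Face, F < G → rank G = rank F + 2 →
    Nat.card {H : Face // F < H ∧ H < G} = 2
  strongly_connected : ∀ F G : Face, F < G → rank F + 3 ≤ rank G →
    ∀ H H' : Face, F < H → H < G → F < H' → H' < G →
    Relation.ReflTransGen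
      (fun A B : Face => F < A ∧ A < G ∧ F < B ∧ B < G ∧ (A ≤ B ∨ B ≤ A)) H H'

attribute [instance] AbstractPolytope.instPartialOrder

namespace AbstractPolytope

variable {n : ℕ} (P : AbstractPolytope n)

/-- The number of flags of `P`. -/
noncomputable def numFlags : ℕ := Nat.card (Flag P.Face)

/-- A vertex is a face of rank `0`. -/
def IsVertex (F : P.Face) : Prop := P.rank F = 0

/-- A facet is a face of rank `n - 1`. -/
def IsFacet (F : P.Face) : Prop := P.rank F = (n : ℤ) - 1

/-- The number of vertices of `P`. -/
noncomputable def numVertices : ℕ := Nat.card {F : P.Face // P.IsVertex F}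

/-- The number of facets of `P`. -/
noncomputable def numFacets : ℕ := Nat.card {F : P.Face // P.IsFacet F}

/-- Two faces are incident when they are comparable. -/
def Incident (F G : P.Face) : Prop := F ≤ G ∨ G ≤ F

/-- `P` is `(k, m)`-flat when every face of rank `k` is incident with every face of
rank `m`. -/
def IsKMFlat (k m : ℤ) : Prop :=
  ∀ F G : P.Face, P.rank F = k → P.rank G = m → P.Incident F G

/-- `P` is flat when every vertex is incident with every facet. -/
def IsFlat : Prop := P.IsKMFlat 0 ((n : ℤ) - 1)

/-- Two flags are adjacent when they differ in exactly one element. -/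
def AdjacentFlags (Φ Ψ : Flag P.Face) : Prop :=
  Φ ≠ Ψ ∧ ((Φ : Set P.Face) \ (Ψ : Set P.Face)).ncard = 1 ∧
    ((Ψ : Set P.Face) \ (Φ : Set P.Face)).ncard = 1

/-- Two flags lie in the same orbit of the automorphism group `Γ(P)` (the group of
order automorphisms of `P`). -/
def SameOrbit (Φ Ψ : Flag P.Face) : Prop :=
  ∃ f : P.Face ≃o P.Face, f '' (Φ : Set P.Face) = (Ψ : Set P.Face)

/-- `P` is regular when `Γ(P)` is transitive on flags. -/
def IsRegular : Prop := ∀ Φ Ψ : Flag P.Face, P.SameOrbit Φ Ψ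

/-- `P` is chiral when its flags fall into exactly two orbits under `Γ(P)` and
adjacent flags always lie in different orbits. -/
def IsChiral : Prop :=
  (∃ Φ₁ Φ₂ : Flag P.Face, ¬ P.SameOrbit Φ₁ Φ₂ ∧
      ∀ Φ : Flag P.Face, P.SameOrbit Φ Φ₁ ∨ P.SameOrbit Φ Φ₂) ∧
  ∀ Φ Ψ : Flag P.Face, P.AdjacentFlags Φ Ψ → ¬ P.SameOrbit Φ Ψ

/-- The polytope `Q` is (isomorphic to) the section `G/F` of `P`: there is an order
isomorphism from `Q` onto the interval `[F, G]` of `P`, shifting ranks by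
`rank F + 1`. -/
def IsSection {m : ℕ} (Q : AbstractPolytope m) (F G : P.Face) : Prop :=
  F ≤ G ∧ ∃ e : Q.Face ≃o (Set.Icc F G),
    ∀ x : Q.Face, P.rank (e x : P.Face) = Q.rank x + P.rank F + 1

/-- `P` is equivelar of Schläfli type `{p 1, …, p (n-1)}`: every section between a
face of rank `i - 2` and a face of rank `i + 1` is a polygon with exactly `p i`
vertices (i.e. it contains exactly `p i` faces of rank `i - 1`). -/
def IsSchlafli (p : ℕ → ℕ) : Prop :=
  ∀ i : ℕ, 1 ≤ i → i ≤ n - 1 →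
    ∀ F G : P.Face, F < G → P.rank F = (i : ℤ) - 2 → P.rank G = (i : ℤ) + 1 →
      Nat.card {H : P.Face // F < H ∧ H < G ∧ P.rank H = (i : ℤ) - 1} = p i

/-- `P` is tight of type `{p 1, …, p (n-1)}`: it is equivelar of that type and has
exactly `2 p₁ ⋯ p_{n-1}` flags. -/
def IsTight (p : ℕ → ℕ) : Prop :=
  P.IsSchlafli p ∧ P.numFlags = 2 * ∏ i ∈ Finset.Icc 1 (n - 1), p i

end AbstractPolytope
namespace AbstractPolytope

section Basics

variable {n : ℕ} (P : AbstractPolytope n)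

theorem rank_le_of_le {F G : P.Face} (h : F ≤ G) : P.rank F ≤ P.rank G := by
  rcases h.eq_or_lt with h | h
  · rw [h]
  · exact (P.rank_strictMono _ _ h).le

theorem rank_ge (F : P.Face) : -1 ≤ P.rank F := by
  have := P.rank_le_of_le (P.bot_le F)
  rwa [P.rank_bot] at this

theorem rank_le (F : P.Face) : P.rank F ≤ n := by
  have := P.rank_le_of_le (P.le_top F)
  rwa [P.rank_top] at this

theorem eq_of_comparable {F G : P.Face} (h : F ≤ G ∨ G ≤ F) (hr : P.rank F = P.rank G) :
    F = G := by
  by_contra hne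
  rcases h with h | h
  · have := P.rank_strictMono _ _ (lt_of_le_of_ne h hne); omega
  · have := P.rank_strictMono _ _ (lt_of_le_of_ne h (Ne.symm hne)); omega

theorem le_of_comparable {F G : P.Face} (h : F ≤ G ∨ G ≤ F) (hr : P.rank F ≤ P.rank G) :
    F ≤ G := by
  rcases h with h | h
  · exact h
  · have := P.rank_le_of_le h
    exact (P.eq_of_comparable (Or.inl h) (by omega)).ge

/-- The face of rank `j` of a flag. -/
noncomputable def fc (Φ : Flag P.Face) (j : ℤ) : P.Face :=
  if h : -1 ≤ j ∧ j ≤ (n : ℤ) then Classical.choose (P.flag_ranks Φ j h.1 h.2) else P.bot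

variable {P}

theorem fc_mem (Φ : Flag P.Face) {j : ℤ} (h1 : -1 ≤ j) (h2 : j ≤ n) : P.fc Φ j ∈ Φ := by
  rw [fc, dif_pos ⟨h1, h2⟩]
  exact (Classical.choose_spec (P.flag_ranks Φ j h1 h2)).1

theorem fc_rank (Φ : Flag P.Face) {j : ℤ} (h1 : -1 ≤ j) (h2 : j ≤ n) :
    P.rank (P.fc Φ j) = j := by
  rw [fc, dif_pos ⟨h1, h2⟩]
  exact (Classical.choose_spec (P.flag_ranks Φ j h1 h2)).2

theorem fc_out (Φ : Flag P.Face) {j : ℤ} (h : ¬ (-1 ≤ j ∧ j ≤ (n : ℤ))) :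
    P.fc Φ j = P.bot := by
  rw [fc, dif_neg h]

theorem fc_of_mem {Φ : Flag P.Face} {F : P.Face} (hF : F ∈ Φ) : P.fc Φ (P.rank F) = F :=
  P.eq_of_comparable (Φ.le_or_le (fc_mem Φ (P.rank_ge F) (P.rank_le F)) hF)
    (fc_rank Φ (P.rank_ge F) (P.rank_le F))

theorem fc_of_mem' {Φ : Flag P.Face} {F : P.Face} {j : ℤ} (hF : F ∈ Φ) (hj : P.rank F = j) :
    P.fc Φ j = F := by
  rw [← hj]; exact fc_of_mem hF

theorem fc_mono (Φ : Flag P.Face) {i j : ℤ} (h1 : -1 ≤ i) (hij : i ≤ j) (h2 : j ≤ n) :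
    P.fc Φ i ≤ P.fc Φ j := by
  refine P.le_of_comparable
    (Φ.le_or_le (fc_mem Φ h1 (by omega)) (fc_mem Φ (by omega) h2)) ?_
  rw [fc_rank Φ h1 (by omega), fc_rank Φ (by omega) h2]
  exact hij

theorem fc_lt (Φ : Flag P.Face) {i j : ℤ} (h1 : -1 ≤ i) (hij : i < j) (h2 : j ≤ n) :
    P.fc Φ i < P.fc Φ j := by
  refine lt_of_le_of_ne (fc_mono Φ h1 hij.le h2) fun h => ?_
  have := congrArg P.rank h
  rw [fc_rank Φ h1 (by omega), fc_rank Φ (by omega) h2] at this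
  omega

theorem fc_neg_one (Φ Ψ : Flag P.Face) {j : ℤ} (hj : j ≤ -1) : P.fc Φ j = P.fc Ψ j := by
  rcases hj.lt_or_eq with hj | rfl
  · rw [fc_out, fc_out] <;> omega
  · have key : ∀ Φ : Flag P.Face, P.fc Φ (-1) = P.bot := fun Φ =>
      (P.eq_of_comparable (Or.inl (P.bot_le _))
        (by rw [P.rank_bot, fc_rank Φ (by omega) (by omega)])).symm
    rw [key, key]

theorem fc_top (Φ Ψ : Flag P.Face) {j : ℤ} (hj : (n : ℤ) ≤ j) : P.fc Φ j = P.fc Ψ j := by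
  rcases hj.lt_or_eq with hj | rfl
  · rw [fc_out, fc_out] <;> omega
  · have key : ∀ Φ : Flag P.Face, P.fc Φ n = P.top := fun Φ =>
      (P.eq_of_comparable (Or.inl (P.le_top _))
        (by rw [P.rank_top, fc_rank Φ (by omega) (by omega)]))
    rw [key, key]

theorem flag_ext {Φ Ψ : Flag P.Face} (h : ∀ j, P.fc Φ j = P.fc Ψ j) : Φ = Ψ := by
  have key : ∀ Φ Ψ : Flag P.Face, (∀ j, P.fc Φ j = P.fc Ψ j) → ∀ F, F ∈ Φ → F ∈ Ψ := by
    intro Φ Ψ h F hF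
    rw [← fc_of_mem hF, h]
    exact fc_mem Ψ (P.rank_ge F) (P.rank_le F)
  exact SetLike.ext fun F => ⟨key _ _ h F, key _ _ (fun j => (h j).symm) F⟩

theorem exists_flag_of_fun (g : ℤ → P.Face)
    (hr : ∀ j : ℤ, -1 ≤ j → j ≤ n → P.rank (g j) = j)
    (hm : ∀ i j : ℤ, -1 ≤ i → i < j → j ≤ n → g i ≤ g j) :
    ∃ Φ : Flag P.Face, ∀ j : ℤ, -1 ≤ j → j ≤ n → P.fc Φ j = g j := by
  have hc : IsChain (· ≤ ·) (g '' Set.Icc (-1) (n : ℤ)) := by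
    rintro _ ⟨i, hi, rfl⟩ _ ⟨j, hj, rfl⟩ hne
    rcases lt_trichotomy i j with h | h | h
    · exact Or.inl (hm i j hi.1 h hj.2)
    · exact absurd (congrArg g h) hne
    · exact Or.inr (hm j i hj.1 h hi.2)
  obtain ⟨Φ, hΦ⟩ := hc.exists_subset_flag
  exact ⟨Φ, fun j h1 h2 => fc_of_mem' (hΦ ⟨j, ⟨h1, h2⟩, rfl⟩) (hr j h1 h2)⟩

/-- Diamond condition, uniqueness form. -/
theorem diamond_unique {F G A B C : P.Face} (hFG : P.rank G = P.rank F + 2)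
    (hA : F < A ∧ A < G) (hB : F < B ∧ B < G) (hC : F < C ∧ C < G)
    (hBA : B ≠ A) (hCA : C ≠ A) : B = C := by
  have h := P.diamond F G (hA.1.trans hA.2) hFG
  rw [Nat.card_eq_two_iff' (⟨A, hA⟩ : {H : P.Face // F < H ∧ H < G})] at h
  have := h.unique (y₁ := ⟨B, hB⟩) (y₂ := ⟨C, hC⟩)
    (fun e => hBA (congrArg Subtype.val e)) (fun e => hCA (congrArg Subtype.val e))
  exact congrArg Subtype.val this

theorem diamond_exists {F G A : P.Face} (hFG : P.rank G = P.rank F + 2)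
    (hA : F < A ∧ A < G) : ∃ B, (F < B ∧ B < G) ∧ B ≠ A := by
  have h := P.diamond F G (hA.1.trans hA.2) hFG
  rw [Nat.card_eq_two_iff' (⟨A, hA⟩ : {H : P.Face // F < H ∧ H < G})] at h
  obtain ⟨⟨B, hB⟩, hne, -⟩ := h
  exact ⟨B, hB, fun e => hne (Subtype.ext e)⟩

/-- two flags with equal faces at ranks `i-1, i+1` and both differing from a third at `i`. -/
theorem fc_eq_of_ne {Φ Ψ Θ : Flag P.Face} {i : ℤ} (h0 : 0 ≤ i) (h1 : i < n)
    (a1 : P.fc Φ (i - 1) = P.fc Θ (i - 1)) (a2 : P.fc Φ (i + 1) = P.fc Θ (i + 1))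
    (b1 : P.fc Ψ (i - 1) = P.fc Θ (i - 1)) (b2 : P.fc Ψ (i + 1) = P.fc Θ (i + 1))
    (ha : P.fc Φ i ≠ P.fc Θ i) (hb : P.fc Ψ i ≠ P.fc Θ i) : P.fc Φ i = P.fc Ψ i := by
  have bd : ∀ Φ : Flag P.Face, P.fc Φ (i - 1) < P.fc Φ i ∧ P.fc Φ i < P.fc Φ (i + 1) :=
    fun Φ => ⟨fc_lt Φ (by omega) (by omega) (by omega), fc_lt Φ (by omega) (by omega) (by omega)⟩
  have hA := bd Φ
  have hB := bd Ψ
  rw [a1, a2] at hA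
  rw [b1, b2] at hB
  refine diamond_unique (F := P.fc Θ (i - 1)) (G := P.fc Θ (i + 1)) ?_ (bd Θ) hA hB ha hb
  rw [fc_rank Θ (by omega) (by omega), fc_rank Θ (by omega) (by omega)]
  ring

/-- `i`-adjacency of flags. -/
def Adj (i : ℤ) (Φ Ψ : Flag P.Face) : Prop :=
  P.fc Ψ i ≠ P.fc Φ i ∧ ∀ j, j ≠ i → P.fc Ψ j = P.fc Φ j

theorem Adj.symm {i : ℤ} {Φ Ψ : Flag P.Face} (h : Adj i Φ Ψ) : Adj i Ψ Φ :=
  ⟨h.1.symm, fun j hj => (h.2 j hj).symm⟩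

theorem Adj.unique {i : ℤ} (h0 : 0 ≤ i) (h1 : i < n) {Φ Ψ Ψ' : Flag P.Face}
    (h : Adj i Φ Ψ) (h' : Adj i Φ Ψ') : Ψ = Ψ' := by
  refine flag_ext fun j => ?_
  by_cases hj : j = i
  · subst hj
    exact fc_eq_of_ne h0 h1 (h.2 _ (by omega)) (h.2 _ (by omega)) (h'.2 _ (by omega))
      (h'.2 _ (by omega)) h.1 h'.1
  · rw [h.2 j hj, h'.2 j hj]

theorem exists_adj {i : ℤ} (h0 : 0 ≤ i) (h1 : i < n) (Φ : Flag P.Face) :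
    ∃ Ψ, Adj i Φ Ψ := by
  obtain ⟨H, ⟨hH1, hH2⟩, hne⟩ := diamond_exists (F := P.fc Φ (i - 1)) (G := P.fc Φ (i + 1))
    (A := P.fc Φ i) (by
      rw [fc_rank Φ (by omega) (by omega), fc_rank Φ (by omega) (by omega)]; ring)
    ⟨fc_lt Φ (by omega) (by omega) (by omega), fc_lt Φ (by omega) (by omega) (by omega)⟩
  have hrH : P.rank H = i := by
    have h1 := P.rank_strictMono _ _ hH1
    have h2 := P.rank_strictMono _ _ hH2
    rw [fc_rank Φ (by omega) (by omega)] at h1 h2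
    omega
  obtain ⟨Ψ, hΨ⟩ := exists_flag_of_fun (P := P) (fun j => if j = i then H else P.fc Φ j)
    (by
      intro j hj1 hj2
      split_ifs with h
      · rw [hrH, h]
      · exact fc_rank Φ hj1 hj2)
    (by
      intro a b ha hab hb
      split_ifs with h h' h'
      · exact le_rfl
      · exact hH2.le.trans (fc_mono Φ (by omega) (by omega) hb)
      · exact le_trans (fc_mono Φ ha (by omega) (by omega)) hH1.le
      · exact fc_mono Φ ha hab.le hb)
  refine ⟨Ψ, ?_, fun j hj => ?_⟩
  · rw [hΨ i (by omega) (by omega), if_pos rfl]; exact hne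
  · by_cases hr : -1 ≤ j ∧ j ≤ (n : ℤ)
    · rw [hΨ j hr.1 hr.2, if_neg hj]
    · rw [fc_out _ hr, fc_out _ hr]

/-- The `i`-adjacent flag (the flag itself if `i` is out of range). -/
noncomputable def adjFlag (i : ℤ) (Φ : Flag P.Face) : Flag P.Face :=
  if h : 0 ≤ i ∧ i < (n : ℤ) then Classical.choose (exists_adj h.1 h.2 Φ) else Φ

theorem adjFlag_adj {i : ℤ} (h0 : 0 ≤ i) (h1 : i < n) (Φ : Flag P.Face) :
    Adj i Φ (adjFlag i Φ) := by
  rw [adjFlag, dif_pos ⟨h0, h1⟩]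
  exact Classical.choose_spec (exists_adj h0 h1 Φ)

theorem adjFlag_invol (i : ℤ) : Function.Involutive (adjFlag (P := P) i) := by
  intro Φ
  by_cases h : 0 ≤ i ∧ i < (n : ℤ)
  · exact Adj.unique h.1 h.2 (adjFlag_adj h.1 h.2 _) (adjFlag_adj h.1 h.2 Φ).symm
  · rw [adjFlag, dif_neg h, adjFlag, dif_neg h]

variable (P) in
/-- The monodromy generators. -/
noncomputable def r (i : ℤ) : Equiv.Perm (Flag P.Face) := (adjFlag_invol (P := P) i).toPerm

theorem r_adj {i : ℤ} (h0 : 0 ≤ i) (h1 : i < n) (Φ : Flag P.Face) : Adj i Φ (P.r i Φ) :=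
  adjFlag_adj h0 h1 Φ

theorem r_out {i : ℤ} (h : ¬ (0 ≤ i ∧ i < (n : ℤ))) : P.r i = 1 := by
  ext1 Φ
  change adjFlag i Φ = Φ
  rw [adjFlag, dif_neg h]

theorem r_r (i : ℤ) (Φ : Flag P.Face) : P.r i (P.r i Φ) = Φ := adjFlag_invol i Φ

theorem r_mul_self (i : ℤ) : P.r i * P.r i = 1 := by
  ext1 Φ; exact r_r i Φ

theorem r_inv (i : ℤ) : (P.r i)⁻¹ = P.r i := inv_eq_of_mul_eq_one_left (r_mul_self i)

theorem fc_r_ne {i j : ℤ} (h : j ≠ i) (Φ : Flag P.Face) : P.fc (P.r i Φ) j = P.fc Φ j := by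
  by_cases hi : 0 ≤ i ∧ i < (n : ℤ)
  · exact (r_adj hi.1 hi.2 Φ).2 j h
  · rw [r_out hi]; rfl

theorem eq_r {i : ℤ} (h0 : 0 ≤ i) (h1 : i < n) {Φ Ψ : Flag P.Face} (h : Adj i Φ Ψ) :
    Ψ = P.r i Φ := Adj.unique h0 h1 h (r_adj h0 h1 Φ)

theorem r_comm {i j : ℤ} (h : i + 2 ≤ j ∨ j + 2 ≤ i) : Commute (P.r i) (P.r j) := by
  by_cases hi : 0 ≤ i ∧ i < (n : ℤ)
  swap
  · rw [r_out hi]; exact Commute.one_left _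
  by_cases hj : 0 ≤ j ∧ j < (n : ℤ)
  swap
  · rw [r_out hj]; exact Commute.one_right _
  change P.r i * P.r j = P.r j * P.r i
  ext1 Φ
  change P.r i (P.r j Φ) = P.r j (P.r i Φ)
  refine eq_r hj.1 hj.2 ⟨?_, fun k hk => ?_⟩
  · rw [fc_r_ne (i := i) (by omega), fc_r_ne (i := i) (by omega)]
    exact (r_adj hj.1 hj.2 Φ).1
  · by_cases hki : k = i
    · subst hki
      refine fc_eq_of_ne (Θ := Φ) hi.1 hi.2 ?_ ?_ ?_ ?_ ?_ ?_
      · rw [fc_r_ne (by omega), fc_r_ne (by omega)]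
      · rw [fc_r_ne (by omega), fc_r_ne (by omega)]
      · rw [fc_r_ne (by omega)]
      · rw [fc_r_ne (by omega)]
      · have := (r_adj hi.1 hi.2 (P.r j Φ)).1
        rwa [fc_r_ne (i := j) (by omega)] at this
      · exact (r_adj hi.1 hi.2 Φ).1
    · rw [fc_r_ne hki, fc_r_ne hk, fc_r_ne hki]

variable (P) in
/-- Subgroup of the monodromy group generated by the `r i` with `i ∈ S`. -/
noncomputable def M (S : Set ℤ) : Subgroup (Equiv.Perm (Flag P.Face)) :=
  Subgroup.closure (P.r '' S)

theorem r_mem {S : Set ℤ} {i : ℤ} (h : i ∈ S) : P.r i ∈ P.M S :=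
  Subgroup.subset_closure ⟨i, h, rfl⟩

theorem M_mono {S T : Set ℤ} (h : S ⊆ T) : P.M S ≤ P.M T :=
  Subgroup.closure_mono (Set.image_mono h)

theorem M_fc {S : Set ℤ} {k : ℤ} (hk : k ∉ S) {w : Equiv.Perm (Flag P.Face)}
    (hw : w ∈ P.M S) : ∀ Φ, P.fc (w Φ) k = P.fc Φ k := by
  refine Subgroup.closure_induction (p := fun w _ => ∀ Φ, P.fc (w Φ) k = P.fc Φ k)
    ?_ ?_ ?_ ?_ hw
  · rintro _ ⟨i, hi, rfl⟩ Φ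
    exact fc_r_ne (by rintro rfl; exact hk hi) Φ
  · intro Φ; rfl
  · intro x y _ _ hx hy Φ
    rw [Equiv.Perm.mul_apply, hx, hy]
  · intro x _ hx Φ
    rw [← hx (x⁻¹ Φ), ← Equiv.Perm.mul_apply, mul_inv_cancel, Equiv.Perm.one_apply]

theorem M_comm {S T : Set ℤ} (h : ∀ i ∈ S, ∀ j ∈ T, i + 2 ≤ j ∨ j + 2 ≤ i)
    {a b : Equiv.Perm (Flag P.Face)} (ha : a ∈ P.M S) (hb : b ∈ P.M T) : a * b = b * a := by
  have h1 : P.M T ≤ Subgroup.centralizer (P.r '' S) := by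
    refine (Subgroup.closure_le _).2 ?_
    rintro _ ⟨j, hj, rfl⟩
    rw [SetLike.mem_coe, Subgroup.mem_centralizer_iff]
    rintro _ ⟨i, hi, rfl⟩
    exact r_comm (h i hi j hj)
  have h2 : P.M S ≤ Subgroup.centralizer (P.M T : Set (Equiv.Perm (Flag P.Face))) := by
    refine (Subgroup.closure_le _).2 ?_
    intro s hs
    rw [SetLike.mem_coe, Subgroup.mem_centralizer_iff]
    intro t ht
    exact ((Subgroup.mem_centralizer_iff.1 (h1 ht)) s hs).symm
  exact ((Subgroup.mem_centralizer_iff.1 (h2 ha)) b hb).symm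

end Basics

end AbstractPolytope
namespace AbstractPolytope

section Connectivity

variable {n : ℕ} {P : AbstractPolytope n}

theorem exists_mix {Θ Ψ : Flag P.Face} {k : ℤ} (h1 : -1 ≤ k) (h2 : k ≤ n)
    (h : P.fc Θ k = P.fc Ψ k) :
    ∃ Λ : Flag P.Face, (∀ j, j ≤ k → P.fc Λ j = P.fc Θ j) ∧
      (∀ j, k ≤ j → P.fc Λ j = P.fc Ψ j) := by
  obtain ⟨Λ, hΛ⟩ := exists_flag_of_fun (P := P)
    (fun j => if j ≤ k then P.fc Θ j else P.fc Ψ j)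
    (by
      intro j hj1 hj2
      split_ifs
      · exact fc_rank Θ hj1 hj2
      · exact fc_rank Ψ hj1 hj2)
    (by
      intro a b ha hab hb
      split_ifs with h3 h4 h4
      · exact fc_mono Θ ha hab.le hb
      · refine (fc_mono Θ ha h3 h2).trans ?_
        rw [h]
        exact fc_mono Ψ h1 (by omega) hb
      · omega
      · exact fc_mono Ψ ha hab.le hb)
  refine ⟨Λ, fun j hj => ?_, fun j hj => ?_⟩
  · by_cases hr : -1 ≤ j ∧ j ≤ (n : ℤ)
    · rw [hΛ j hr.1 hr.2, if_pos hj]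
    · rw [fc_out _ hr, fc_out _ hr]
  · by_cases hr : -1 ≤ j ∧ j ≤ (n : ℤ)
    · rw [hΛ j hr.1 hr.2]
      split_ifs with h'
      · have : j = k := by omega
        rw [this, h]
      · rfl
    · rw [fc_out _ hr, fc_out _ hr]

/-- Two flags are connected by a word in the generators indexed by `S`. -/
def Conn (S : Set ℤ) (Φ Ψ : Flag P.Face) : Prop := ∃ w ∈ P.M S, w Φ = Ψ

theorem Conn.refl (S : Set ℤ) (Φ : Flag P.Face) : Conn S Φ Φ := ⟨1, one_mem _, rfl⟩

theorem Conn.of_eq {S : Set ℤ} {Φ Ψ : Flag P.Face} (h : Φ = Ψ) : Conn S Φ Ψ := h ▸ Conn.refl S Φ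

theorem Conn.trans {S : Set ℤ} {Φ Ψ Θ : Flag P.Face} (h1 : Conn S Φ Ψ) (h2 : Conn S Ψ Θ) :
    Conn S Φ Θ := by
  obtain ⟨a, ha, rfl⟩ := h1
  obtain ⟨b, hb, rfl⟩ := h2
  exact ⟨b * a, mul_mem hb ha, rfl⟩

theorem Conn.mono {S T : Set ℤ} (hST : S ⊆ T) {Φ Ψ : Flag P.Face} (h : Conn S Φ Ψ) :
    Conn T Φ Ψ := by
  obtain ⟨a, ha, h⟩ := h
  exact ⟨a, M_mono hST ha, h⟩

/-- A flag through two comparable faces in an open section and with prescribed faces outside. -/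
theorem exists_flag_two {Φ : Flag P.Face} {i j : ℤ} (h1 : -1 ≤ i) (hij : i ≤ j) (h2 : j ≤ n)
    {A B : P.Face} (hA1 : P.fc Φ i ≤ A) (hB2 : B ≤ P.fc Φ j)
    (hAB : A ≤ B) :
    ∃ Θ : Flag P.Face, A ∈ Θ ∧ B ∈ Θ ∧ ∀ k, k ≤ i ∨ j ≤ k → P.fc Θ k = P.fc Φ k := by
  have hB1 := hA1.trans hAB
  have hA2 := hAB.trans hB2
  let T : Set P.Face := {F | ∃ k : ℤ, (-1 ≤ k ∧ k ≤ n) ∧ (k ≤ i ∨ j ≤ k) ∧ P.fc Φ k = F}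
  have hT : ∀ X : P.Face, P.fc Φ i ≤ X → X ≤ P.fc Φ j → ∀ F ∈ T, X ≤ F ∨ F ≤ X := by
    rintro X hX1 hX2 F ⟨k, ⟨hk1, hk2⟩, hk | hk, rfl⟩
    · exact Or.inr ((fc_mono Φ hk1 hk (by omega)).trans hX1)
    · exact Or.inl (hX2.trans (fc_mono Φ (by omega) hk hk2))
  have hTc : IsChain (· ≤ ·) T := by
    rintro F ⟨k, ⟨hk1, hk2⟩, -, rfl⟩ G ⟨l, ⟨hl1, hl2⟩, -, rfl⟩ -
    exact Φ.le_or_le (fc_mem Φ hk1 hk2) (fc_mem Φ hl1 hl2)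
  have hc : IsChain (· ≤ ·) (insert A (insert B T)) := by
    refine IsChain.insert (IsChain.insert hTc fun F hF _ => hT B hB1 hB2 F hF) ?_
    rintro F (rfl | hF) -
    · exact Or.inl hAB
    · exact hT A hA1 hA2 F hF
  obtain ⟨Θ, hΘ⟩ := hc.exists_subset_flag
  refine ⟨Θ, hΘ (by simp), hΘ (by simp), fun k hk => ?_⟩
  by_cases hr : -1 ≤ k ∧ k ≤ (n : ℤ)
  · exact fc_of_mem' (hΘ (Or.inr (Or.inr ⟨k, hr, hk, rfl⟩))) (fc_rank Φ hr.1 hr.2)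
  · rw [fc_out _ hr, fc_out _ hr]

theorem conn_aux (d : ℕ) : ∀ i j : ℤ, -1 ≤ i → j ≤ n → j - i ≤ d → ∀ Φ Ψ : Flag P.Face,
    (∀ k, k ≤ i ∨ j ≤ k → P.fc Φ k = P.fc Ψ k) → Conn (Set.Ioo i j) Φ Ψ := by
  induction d with
  | zero =>
    intro i j _ _ hd Φ Ψ h
    refine Conn.of_eq (flag_ext fun k => h k ?_)
    push_cast at hd
    omega
  | succ d ih =>
    intro i j hi hj hd Φ Ψ h
    push_cast at hd
    rcases lt_trichotomy (j - i) 2 with h2 | h2 | h2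
    · exact Conn.of_eq (flag_ext fun k => h k (by omega))
    · by_cases he : P.fc Φ (i + 1) = P.fc Ψ (i + 1)
      · refine Conn.of_eq (flag_ext fun k => ?_)
        by_cases hk : k = i + 1
        · rw [hk, he]
        · exact h k (by omega)
      · refine ⟨P.r (i + 1), r_mem ⟨by omega, by omega⟩, (eq_r (by omega) (by omega) ?_).symm⟩
        exact ⟨fun e => he e.symm, fun k hk => (h k (by omega)).symm⟩
    · -- flags sharing a face strictly between
      have share : ∀ (Θ Ψ : Flag P.Face) (k : ℤ), i < k → k < j →
          (∀ l, l ≤ i ∨ j ≤ l → P.fc Θ l = P.fc Ψ l) → P.fc Θ k = P.fc Ψ k →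
          Conn (Set.Ioo i j) Θ Ψ := by
        intro Θ Ψ k hk1 hk2 hout hk
        obtain ⟨Λ, hΛ1, hΛ2⟩ := exists_mix (by omega) (by omega) hk
        have c1 : Conn (Set.Ioo k j) Θ Λ := by
          refine ih k j (by omega) hj (by omega) _ _ fun l hl => ?_
          rcases hl with hl | hl
          · exact (hΛ1 l hl).symm
          · rw [hΛ2 l (by omega)]; exact hout l (Or.inr hl)
        have c2 : Conn (Set.Ioo i k) Λ Ψ := by
          refine ih i k hi (by omega) (by omega) _ _ fun l hl => ?_
          rcases hl with hl | hl
          · rw [hΛ1 l (by omega)]; exact hout l (Or.inl hl)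
          · exact hΛ2 l hl
        exact (c1.mono (Set.Ioo_subset_Ioo_left hk1.le)).trans
          (c2.mono (Set.Ioo_subset_Ioo_right hk2.le))
      have bd : ∀ A : P.Face, P.fc Φ i < A → A < P.fc Φ j → i < P.rank A ∧ P.rank A < j := by
        intro A hA1 hA2
        have h3 := P.rank_strictMono _ _ hA1
        have h4 := P.rank_strictMono _ _ hA2
        rw [fc_rank Φ (by omega) (by omega)] at h3 h4
        exact ⟨h3, h4⟩
      have hΦ1 : P.fc Φ i < P.fc Φ (i + 1) := fc_lt Φ hi (by omega) (by omega)
      have hΦ2 : P.fc Φ (i + 1) < P.fc Φ j := fc_lt Φ (by omega) (by omega) (by omega)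
      have hΨ1 : P.fc Φ i < P.fc Ψ (i + 1) := by
        rw [h i (Or.inl le_rfl)]; exact fc_lt Ψ hi (by omega) (by omega)
      have hΨ2 : P.fc Ψ (i + 1) < P.fc Φ j := by
        rw [h j (Or.inr le_rfl)]; exact fc_lt Ψ (by omega) (by omega) (by omega)
      have hcon := P.strongly_connected (P.fc Φ i) (P.fc Φ j) (hΦ1.trans hΦ2)
        (by rw [fc_rank Φ (by omega) (by omega), fc_rank Φ (by omega) (by omega)]; omega)
        _ _ hΦ1 hΦ2 hΨ1 hΨ2
      have main : ∀ A : P.Face, Relation.ReflTransGen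
          (fun A B : P.Face => P.fc Φ i < A ∧ A < P.fc Φ j ∧ P.fc Φ i < B ∧ B < P.fc Φ j ∧
            (A ≤ B ∨ B ≤ A)) (P.fc Φ (i + 1)) A →
          ∀ Ψ : Flag P.Face, A ∈ Ψ → (∀ k, k ≤ i ∨ j ≤ k → P.fc Φ k = P.fc Ψ k) →
            Conn (Set.Ioo i j) Φ Ψ := by
        intro A hA
        induction hA with
        | refl =>
          intro Ψ hmem hout
          exact share Φ Ψ (i + 1) (by omega) (by omega) hout
            (fc_of_mem' hmem (fc_rank Φ (by omega) (by omega))).symm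
        | @tail A B _ hst ih' =>
          intro Ψ hmem hout
          obtain ⟨hA1, hA2, hB1, hB2, hAB⟩ := hst
          have hΘ : ∃ Θ : Flag P.Face, A ∈ Θ ∧ B ∈ Θ ∧
              ∀ k, k ≤ i ∨ j ≤ k → P.fc Θ k = P.fc Φ k := by
            rcases hAB with hAB | hAB
            · exact exists_flag_two hi (by omega) hj hA1.le hB2.le hAB
            · obtain ⟨Θ, h1, h2, h3⟩ := exists_flag_two hi (by omega) hj hB1.le hA2.le hAB
              exact ⟨Θ, h2, h1, h3⟩
          obtain ⟨Θ, hAΘ, hBΘ, hΘout⟩ := hΘ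
          refine (ih' Θ hAΘ fun k hk => (hΘout k hk).symm).trans ?_
          have hb := bd B hB1 hB2
          refine share Θ Ψ (P.rank B) hb.1 hb.2 (fun l hl => ?_) ?_
          · rw [hΘout l hl, hout l hl]
          · rw [fc_of_mem hBΘ, fc_of_mem hmem]
      exact main _ hcon Ψ (fc_mem Ψ (by omega) (by omega)) h

theorem conn_Ioo {i j : ℤ} (hi : -1 ≤ i) (hj : j ≤ n) {Φ Ψ : Flag P.Face}
    (h : ∀ k, k ≤ i ∨ j ≤ k → P.fc Φ k = P.fc Ψ k) : Conn (Set.Ioo i j) Φ Ψ :=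
  conn_aux (j - i).toNat i j hi hj (Int.self_le_toNat _) Φ Ψ h

theorem conn_all (Φ Ψ : Flag P.Face) : Conn Set.univ Φ Ψ :=
  (conn_Ioo (i := -1) (j := n) le_rfl le_rfl fun k hk => by
    rcases hk with hk | hk
    · exact fc_neg_one Φ Ψ hk
    · exact fc_top Φ Ψ hk).mono (Set.subset_univ _)

theorem conn_share {Φ Ψ : Flag P.Face} {k : ℤ} (h1 : -1 ≤ k) (h2 : k ≤ n)
    (h : P.fc Φ k = P.fc Ψ k) : Conn {k}ᶜ Φ Ψ := by
  obtain ⟨Λ, hΛ1, hΛ2⟩ := exists_mix h1 h2 h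
  have c1 : Conn (Set.Ioo k n) Φ Λ := by
    refine conn_Ioo h1 le_rfl fun l hl => ?_
    rcases hl with hl | hl
    · exact (hΛ1 l hl).symm
    · exact fc_top _ _ hl
  have c2 : Conn (Set.Ioo (-1) k) Λ Ψ := by
    refine conn_Ioo le_rfl h2 fun l hl => ?_
    rcases hl with hl | hl
    · exact fc_neg_one _ _ hl
    · exact hΛ2 l hl
  refine (c1.mono ?_).trans (c2.mono ?_)
  · rintro l ⟨h3, h4⟩ (h5 : l = k); omega
  · rintro l ⟨h3, h4⟩ (h5 : l = k); omega

/-! ### Constructing automorphisms -/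

theorem exists_faceMap {Φ Φ' : Flag P.Face}
    (h : ∀ w ∈ P.M Set.univ, w Φ = Φ → w Φ' = Φ') :
    ∃ f : P.Face → P.Face, ∀ w ∈ P.M Set.univ, ∀ F ∈ w Φ, f F = P.fc (w Φ') (P.rank F) := by
  have hex : ∀ F : P.Face, ∃ w ∈ P.M Set.univ, F ∈ w Φ := by
    intro F
    obtain ⟨Ψ, hΨ⟩ := (Set.subsingleton_singleton (a := F)).isChain
      (r := (· ≤ ·)) |>.exists_subset_flag
    obtain ⟨w, hw, rfl⟩ := conn_all Φ Ψ
    exact ⟨w, hw, hΨ rfl⟩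
  choose v hv hvF using hex
  refine ⟨fun F => P.fc (v F Φ') (P.rank F), fun w hw F hF => ?_⟩
  obtain ⟨u, hu, he⟩ := conn_share (Φ := v F Φ) (Ψ := w Φ) (k := P.rank F) (P.rank_ge F)
    (P.rank_le F) (by rw [fc_of_mem (hvF F), fc_of_mem hF])
  have hu' := M_mono (Set.subset_univ _) hu
  have h1 : (w⁻¹ * (u * v F)) Φ' = Φ' := by
    refine h _ (mul_mem (inv_mem hw) (mul_mem hu' (hv F))) ?_
    rw [Equiv.Perm.mul_apply, Equiv.Perm.mul_apply, he, ← Equiv.Perm.mul_apply,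
      inv_mul_cancel, Equiv.Perm.one_apply]
  have h2 : u (v F Φ') = w Φ' := by
    have := congrArg w h1
    rwa [← Equiv.Perm.mul_apply, mul_inv_cancel_left] at this
  change P.fc (v F Φ') (P.rank F) = _
  rw [← h2, M_fc (by simp) hu]

theorem faceMap_mono {Φ Φ' : Flag P.Face} {f : P.Face → P.Face}
    (hf : ∀ w ∈ P.M Set.univ, ∀ F ∈ w Φ, f F = P.fc (w Φ') (P.rank F)) : Monotone f := by
  intro F G hFG
  obtain ⟨Ψ, hΨ⟩ := (IsChain.pair (r := (· ≤ ·)) hFG).exists_subset_flag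
  obtain ⟨w, hw, rfl⟩ := conn_all Φ Ψ
  rw [hf w hw F (hΨ (by simp)), hf w hw G (hΨ (by simp))]
  exact fc_mono _ (P.rank_ge F) (P.rank_le_of_le hFG) (P.rank_le G)

theorem faceMap_inv {Φ Φ' : Flag P.Face} {f g : P.Face → P.Face}
    (hf : ∀ w ∈ P.M Set.univ, ∀ F ∈ w Φ, f F = P.fc (w Φ') (P.rank F))
    (hg : ∀ w ∈ P.M Set.univ, ∀ F ∈ w Φ', g F = P.fc (w Φ) (P.rank F)) (F : P.Face) :
    g (f F) = F := by
  obtain ⟨Ψ, hΨ⟩ := (IsChain.pair (r := (· ≤ ·)) (le_refl F)).exists_subset_flag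
  obtain ⟨w, hw, rfl⟩ := conn_all Φ Ψ
  have hF : F ∈ w Φ := hΨ (by simp)
  have h1 := P.rank_ge F
  have h2 := P.rank_le F
  rw [hf w hw F hF, hg w hw _ (fc_mem _ h1 h2), fc_rank _ h1 h2, fc_of_mem hF]

theorem sameOrbit_of_stab {Φ Φ' : Flag P.Face}
    (h : ∀ w ∈ P.M Set.univ, w Φ = Φ → w Φ' = Φ')
    (h' : ∀ w ∈ P.M Set.univ, w Φ' = Φ' → w Φ = Φ) : P.SameOrbit Φ Φ' := by
  obtain ⟨f, hf⟩ := exists_faceMap h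
  obtain ⟨g, hg⟩ := exists_faceMap h'
  let e : P.Face ≃ P.Face := ⟨f, g, faceMap_inv hf hg, faceMap_inv hg hf⟩
  refine ⟨e.toOrderIso (faceMap_mono hf) (faceMap_mono hg), ?_⟩
  have key : ∀ (Φ Φ' : Flag P.Face) (f : P.Face → P.Face),
      (∀ w ∈ P.M Set.univ, ∀ F ∈ w Φ, f F = P.fc (w Φ') (P.rank F)) →
      ∀ F ∈ Φ, f F ∈ Φ' := by
    intro Φ Φ' f hf F hF
    rw [hf 1 (one_mem _) F hF]
    exact fc_mem _ (P.rank_ge F) (P.rank_le F)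
  apply Set.Subset.antisymm
  · rintro _ ⟨F, hF, rfl⟩
    exact key Φ Φ' f hf F hF
  · intro F hF
    exact ⟨g F, key Φ' Φ g hg F hF, faceMap_inv hg hf F⟩

/-! ### Automorphisms act on flags, commuting with monodromy -/

theorem rank_le_rank_map (f : P.Face ≃o P.Face) (F : P.Face) : P.rank F ≤ P.rank (f F) := by
  obtain ⟨Ψ, hΨ⟩ := (IsChain.pair (r := (· ≤ ·)) (le_refl F)).exists_subset_flag
  have hF : F ∈ Ψ := hΨ (by simp)
  have key : ∀ d : ℕ, (d : ℤ) - 1 ≤ n → (d : ℤ) - 1 ≤ P.rank (f (P.fc Ψ ((d : ℤ) - 1))) := by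
    intro d
    induction d with
    | zero => intro _; exact P.rank_ge _
    | succ d ih =>
      intro hd
      push_cast at hd ⊢
      have h1 := ih (by omega)
      have h2 := P.rank_strictMono _ _ (f.strictMono
        (fc_lt Ψ (i := (d : ℤ) - 1) (j := (d : ℤ) + 1 - 1) (by omega) (by omega) (by omega)))
      omega
  have h0 := P.rank_ge F
  have h1 := P.rank_le F
  have h2 := key (P.rank F + 1).toNat (by omega)
  rw [Int.toNat_of_nonneg (by omega), add_sub_cancel_right, fc_of_mem hF] at h2
  exact h2

theorem rank_map (f : P.Face ≃o P.Face) (F : P.Face) : P.rank (f F) = P.rank F := by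
  refine le_antisymm ?_ (rank_le_rank_map f F)
  have := rank_le_rank_map f.symm (f F)
  rwa [f.symm_apply_apply] at this

theorem fc_map (f : P.Face ≃o P.Face) (Φ : Flag P.Face) {j : ℤ} (h1 : -1 ≤ j) (h2 : j ≤ n) :
    P.fc (Flag.map f Φ) j = f (P.fc Φ j) := by
  refine fc_of_mem' ?_ ?_
  · change f (P.fc Φ j) ∈ f '' (Φ : Set P.Face)
    exact ⟨_, fc_mem Φ h1 h2, rfl⟩
  · rw [rank_map, fc_rank Φ h1 h2]

theorem map_r (f : P.Face ≃o P.Face) (i : ℤ) (Φ : Flag P.Face) :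
    Flag.map f (P.r i Φ) = P.r i (Flag.map f Φ) := by
  by_cases hi : 0 ≤ i ∧ i < (n : ℤ)
  · refine eq_r hi.1 hi.2 ⟨?_, fun j hj => ?_⟩
    · rw [fc_map f _ (by omega) (by omega), fc_map f _ (by omega) (by omega)]
      exact fun e => (r_adj hi.1 hi.2 Φ).1 (f.injective e)
    · by_cases hr : -1 ≤ j ∧ j ≤ (n : ℤ)
      · rw [fc_map f _ hr.1 hr.2, fc_map f _ hr.1 hr.2, fc_r_ne hj]
      · rw [fc_out _ hr, fc_out _ hr]
  · rw [r_out hi]; rfl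

theorem map_M (f : P.Face ≃o P.Face) {S : Set ℤ} {w : Equiv.Perm (Flag P.Face)}
    (hw : w ∈ P.M S) : ∀ Φ, Flag.map f (w Φ) = w (Flag.map f Φ) := by
  refine Subgroup.closure_induction
    (p := fun w _ => ∀ Φ, Flag.map f (w Φ) = w (Flag.map f Φ)) ?_ ?_ ?_ ?_ hw
  · rintro _ ⟨i, _, rfl⟩ Φ
    exact map_r f i Φ
  · intro Φ; rfl
  · intro x y _ _ hx hy Φ
    rw [Equiv.Perm.mul_apply, hx, hy, Equiv.Perm.mul_apply]
  · intro x _ hx Φ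
    apply x.injective
    have e : ∀ y, x (x⁻¹ y) = y := fun y => x.apply_symm_apply y
    rw [← hx, e, e]

theorem sameOrbit_iff {Φ Ψ : Flag P.Face} :
    P.SameOrbit Φ Ψ ↔ ∃ f : P.Face ≃o P.Face, Flag.map f Φ = Ψ := by
  constructor
  · rintro ⟨f, hf⟩
    exact ⟨f, SetLike.coe_injective hf⟩
  · rintro ⟨f, rfl⟩
    exact ⟨f, rfl⟩

theorem SameOrbit.symm' {Φ Ψ : Flag P.Face} (h : P.SameOrbit Φ Ψ) : P.SameOrbit Ψ Φ := by
  obtain ⟨f, hf⟩ := h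
  refine ⟨f.symm, ?_⟩
  rw [← hf, ← Set.image_comp]
  simp

theorem SameOrbit.trans' {Φ Ψ Θ : Flag P.Face} (h : P.SameOrbit Φ Ψ) (h' : P.SameOrbit Ψ Θ) :
    P.SameOrbit Φ Θ := by
  obtain ⟨f, hf⟩ := h
  obtain ⟨g, hg⟩ := h'
  refine ⟨f.trans g, ?_⟩
  rw [← hg, ← hf, ← Set.image_comp]
  rfl

theorem SameOrbit.apply {Φ Ψ : Flag P.Face} (h : P.SameOrbit Φ Ψ) {S : Set ℤ}
    {w : Equiv.Perm (Flag P.Face)} (hw : w ∈ P.M S) : P.SameOrbit (w Φ) (w Ψ) := by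
  obtain ⟨f, rfl⟩ := sameOrbit_iff.1 h
  exact sameOrbit_iff.2 ⟨f, map_M f hw Φ⟩

theorem SameOrbit.fix {Φ Ψ : Flag P.Face} (h : P.SameOrbit Φ Ψ) {S : Set ℤ}
    {w : Equiv.Perm (Flag P.Face)} (hw : w ∈ P.M S) (hfix : w Φ = Φ) : w Ψ = Ψ := by
  obtain ⟨f, rfl⟩ := sameOrbit_iff.1 h
  rw [← map_M f hw, hfix]

theorem r_adjacentFlags {i : ℤ} (h0 : 0 ≤ i) (h1 : i < n) (Φ : Flag P.Face) :
    P.AdjacentFlags Φ (P.r i Φ) := by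
  have key : ∀ Φ Ψ : Flag P.Face, Adj i Φ Ψ →
      ((Φ : Set P.Face) \ (Ψ : Set P.Face)).ncard = 1 := by
    intro Φ Ψ h
    rw [Set.ncard_eq_one]
    refine ⟨P.fc Φ i, Set.ext fun F => ⟨?_, ?_⟩⟩
    · rintro ⟨hF, hF'⟩
      by_contra hne
      have hr : P.rank F ≠ i := by
        intro hr
        exact hne (fc_of_mem' hF hr).symm
      apply hF'
      rw [← fc_of_mem hF, ← h.2 _ hr]
      exact fc_mem Ψ (P.rank_ge F) (P.rank_le F)
    · rintro rfl
      refine ⟨fc_mem Φ (by omega) (by omega), fun hmem => h.1 ?_⟩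
      exact fc_of_mem' hmem (fc_rank Φ (by omega) (by omega))
  have had := r_adj h0 h1 Φ
  refine ⟨fun e => had.1 (by rw [← e]), key _ _ had, key _ _ had.symm⟩

end Connectivity

end AbstractPolytope
namespace AbstractPolytope

section Chiral

variable {n : ℕ} {P : AbstractPolytope n}

theorem IsChiral.not_sameOrbit (hch : P.IsChiral) {i : ℤ} (h0 : 0 ≤ i) (h1 : i < n)
    (Φ : Flag P.Face) : ¬ P.SameOrbit Φ (P.r i Φ) :=
  hch.2 _ _ (r_adjacentFlags h0 h1 Φ)

theorem IsChiral.two_orbits (hch : P.IsChiral) {i : ℤ} (h0 : 0 ≤ i) (h1 : i < n)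
    (Φ Ψ : Flag P.Face) : P.SameOrbit Φ Ψ ∨ P.SameOrbit (P.r i Φ) Ψ := by
  obtain ⟨Φ₁, Φ₂, -, h⟩ := hch.1
  have hn := hch.not_sameOrbit h0 h1 Φ
  rcases h Φ with ha | ha <;> rcases h (P.r i Φ) with hb | hb <;> rcases h Ψ with hc | hc <;>
    first
    | exact Or.inl (ha.trans' hc.symm')
    | exact Or.inr (hb.trans' hc.symm')
    | exact absurd (ha.trans' hb.symm') hn

theorem IsChiral.contra (hch : P.IsChiral) {e : ℤ} (h0 : 0 ≤ e) (h1 : e < n)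
    (h : ∀ Φ : Flag P.Face, ∀ w ∈ P.M Set.univ, w Φ = Φ → w (P.r e Φ) = P.r e Φ) : False := by
  obtain ⟨Φ, -⟩ := hch.1
  refine hch.not_sameOrbit h0 h1 Φ (sameOrbit_of_stab (h Φ) fun w hw hfix => ?_)
  have := h _ w hw hfix
  rwa [r_r] at this

theorem IsChiral.contra_central (hch : P.IsChiral) {e : ℤ} (h0 : 0 ≤ e) (h1 : e < n)
    (h : ∀ i : ℤ, 0 ≤ i → i < n → ∀ Φ, P.r e (P.r i Φ) = P.r i (P.r e Φ)) : False := by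
  refine hch.contra h0 h1 fun Φ w hw hfix => ?_
  have hc : P.M Set.univ ≤ Subgroup.centralizer {P.r e} := by
    refine (Subgroup.closure_le _).2 ?_
    rintro _ ⟨i, -, rfl⟩
    rw [SetLike.mem_coe, Subgroup.mem_centralizer_iff]
    rintro _ rfl
    by_cases hi : 0 ≤ i ∧ i < (n : ℤ)
    · ext1 Φ
      exact h i hi.1 hi.2 Φ
    · rw [r_out hi]; simp
  have h2 := Subgroup.mem_centralizer_iff.1 (hc hw) _ rfl
  have h3 := congrArg (fun u : Equiv.Perm (Flag P.Face) => u Φ) h2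
  simp only [Equiv.Perm.mul_apply] at h3
  rw [← h3, hfix]

/-- There are no chiral polytopes of rank at most two. -/
theorem IsChiral.three_le (hch : P.IsChiral) : 3 ≤ n := by
  by_contra hn
  have hcases : n = 0 ∨ n = 1 ∨ n = 2 := by omega
  rcases hcases with hn | hn | hn
  · obtain ⟨Φ₁, Φ₂, h, -⟩ := hch.1
    have : Φ₁ = Φ₂ := flag_ext fun j => by
      rcases le_or_gt j (-1) with hj | hj
      · exact fc_neg_one _ _ hj
      · exact fc_top _ _ (by omega)
    exact h (this ▸ sameOrbit_iff.2 ⟨OrderIso.refl _, by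
      apply SetLike.coe_injective
      simp⟩)
  · refine hch.contra_central (e := 0) le_rfl (by omega) fun i h0 h1 Φ => ?_
    have : i = 0 := by omega
    rw [this]
  · refine hch.contra (e := 0) le_rfl (by omega) fun Φ w hw hfix => ?_
    set s : Equiv.Perm (Flag P.Face) := P.r 0 * P.r 1 with hs
    have hsr : P.r 0 * s * P.r 0 = s⁻¹ := by
      rw [hs, mul_inv_rev, r_inv, r_inv, ← mul_assoc, r_mul_self, one_mul]
    have hr0 : P.r 0 ∈ P.M Set.univ := r_mem (Set.mem_univ _)
    have hr1 : P.r 1 ∈ P.M Set.univ := r_mem (Set.mem_univ _)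
    have hsM : s ∈ P.M Set.univ := mul_mem hr0 hr1
    have hsk : ∀ k : ℤ, P.r 0 * s ^ k * P.r 0 = s ^ (-k) := by
      intro k
      have h1 : P.r 0 * s ^ k * (P.r 0)⁻¹ = (P.r 0 * s * (P.r 0)⁻¹) ^ k := (conj_zpow).symm
      rw [r_inv, hsr] at h1
      rw [h1, inv_zpow, zpow_neg]
    have hsk' : ∀ k : ℤ, P.r 0 * s ^ k = s ^ (-k) * P.r 0 := by
      intro k
      rw [← hsk k, mul_assoc _ (P.r 0) (P.r 0), r_mul_self, mul_one]
    have form : ∀ w ∈ P.M Set.univ, ∃ k : ℤ, w = s ^ k ∨ w = s ^ k * P.r 0 := by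
      intro w hw
      refine Subgroup.closure_induction
        (p := fun w _ => ∃ k : ℤ, w = s ^ k ∨ w = s ^ k * P.r 0) ?_ ?_ ?_ ?_ hw
      · rintro _ ⟨i, -, rfl⟩
        by_cases hi0 : i = 0
        · exact ⟨0, Or.inr (by rw [hi0, zpow_zero, one_mul])⟩
        by_cases hi1 : i = 1
        · refine ⟨-1, Or.inr ?_⟩
          rw [hi1, hs, zpow_neg_one, mul_inv_rev, r_inv, r_inv, mul_assoc, r_mul_self, mul_one]
        · exact ⟨0, Or.inl (by rw [r_out (by omega), zpow_zero])⟩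
      · exact ⟨0, Or.inl (zpow_zero s).symm⟩
      · rintro x y _ _ ⟨k, rfl | rfl⟩ ⟨l, rfl | rfl⟩
        · exact ⟨k + l, Or.inl (zpow_add s k l).symm⟩
        · exact ⟨k + l, Or.inr (by rw [zpow_add, mul_assoc])⟩
        · exact ⟨k + -l, Or.inr (by rw [zpow_add, mul_assoc, hsk', mul_assoc])⟩
        · refine ⟨k + -l, Or.inl ?_⟩
          rw [zpow_add, mul_assoc, ← mul_assoc (P.r 0), hsk]
      · rintro x _ ⟨k, rfl | rfl⟩
        · exact ⟨-k, Or.inl (zpow_neg s k).symm⟩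
        · refine ⟨k, Or.inr ?_⟩
          rw [mul_inv_rev, r_inv, ← zpow_neg, hsk', neg_neg]
    -- `s` preserves orbits
    have hs1 : ∀ Φ : Flag P.Face, P.SameOrbit Φ (s Φ) := by
      intro Φ
      rcases hch.two_orbits (i := 1) (by omega) (by omega) Φ (s Φ) with h | h
      · exact h
      · exact absurd h (hch.not_sameOrbit le_rfl (by omega) (P.r 1 Φ))
    have hsk1 : ∀ (k : ℕ) (Φ : Flag P.Face), P.SameOrbit Φ ((s ^ k) Φ) := by
      intro k
      induction k with
      | zero => intro Φ; exact sameOrbit_iff.2 ⟨OrderIso.refl _, by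
          apply SetLike.coe_injective
          simp⟩
      | succ k ih =>
        intro Φ
        rw [pow_succ', Equiv.Perm.mul_apply]
        exact (ih Φ).trans' (hs1 _)
    have hsz : ∀ (k : ℤ) (Φ : Flag P.Face), P.SameOrbit Φ ((s ^ k) Φ) := by
      intro k Φ
      obtain ⟨m, rfl | rfl⟩ := k.eq_nat_or_neg
      · rw [zpow_natCast]; exact hsk1 m Φ
      · have := (hsk1 m ((s ^ (-(m : ℤ))) Φ)).symm'
        rwa [← zpow_natCast, ← Equiv.Perm.mul_apply, ← zpow_add, add_neg_cancel, zpow_zero,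
          Equiv.Perm.one_apply] at this
    obtain ⟨k, rfl | rfl⟩ := form w hw
    · have h1 : (s ^ (-k)) Φ = Φ := by
        rw [zpow_neg]
        exact Equiv.Perm.inv_eq_iff_eq.2 hfix.symm
      rw [← hsk, Equiv.Perm.mul_apply, Equiv.Perm.mul_apply] at h1
      have h2 := congrArg (P.r 0) h1
      rwa [r_r] at h2
    · exfalso
      refine hch.not_sameOrbit le_rfl (by omega) Φ ?_
      have := (hsz k (P.r 0 Φ)).symm'
      rw [← Equiv.Perm.mul_apply, hfix] at this
      exact this

theorem IsChiral.core (hch : P.IsChiral) {e e' : ℤ} (he0 : 0 ≤ e) (he1 : e < n)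
    (he0' : 0 ≤ e') (he1' : e' < n) (S SA SB SC : Set ℤ)
    (hAS : SA ⊆ S) (hCS : SC ⊆ S) (hCB : SC ⊆ SB)
    (hS : ∀ i ∈ S, i + 2 ≤ e' ∨ e' + 2 ≤ i)
    (hB : ∀ i ∈ SB, i + 2 ≤ e ∨ e + 2 ≤ i)
    (hcover : ∀ i : ℤ, 0 ≤ i → i < n → i ∈ SA ∨ (i ∈ S ∧ i ∈ SB) ∨
      (i ∈ SB ∧ ∀ j ∈ SA, j + 2 ≤ i ∨ i + 2 ≤ j))
    (hflat : ∀ w ∈ P.M S, ∀ Φ, ∃ a ∈ P.M SA, ∃ b ∈ P.M (S ∩ SB), w Φ = b (a Φ))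
    (hint : ∀ a ∈ P.M SA, ∀ b ∈ P.M SB, ∀ Φ, a Φ = b Φ → ∃ c ∈ P.M SC, a Φ = c Φ) : False := by
  have hreg : ∀ w ∈ P.M S, ∀ Φ, w Φ = Φ → w = 1 := by
    intro w hw Φ hfix
    have hcom : w * P.r e' = P.r e' * w :=
      M_comm (S := S) (T := {e'}) (by rintro i hi j rfl; exact hS i hi) hw (r_mem rfl)
    have hfix' : w (P.r e' Φ) = P.r e' Φ := by
      rw [← Equiv.Perm.mul_apply, hcom, Equiv.Perm.mul_apply, hfix]
    ext1 Ψ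
    rcases hch.two_orbits he0' he1' Φ Ψ with h | h
    · exact h.fix hw hfix
    · exact h.fix hw hfix'
  obtain ⟨Φ₀, -⟩ := hch.1
  have hS2 : ∀ w ∈ P.M S, ∃ a ∈ P.M SA, ∃ b ∈ P.M SB, w = b * a := by
    intro w hw
    obtain ⟨a, ha, b, hb, h⟩ := hflat w hw Φ₀
    refine ⟨a, ha, b, M_mono Set.inter_subset_right hb, ?_⟩
    have h1 : (b * a)⁻¹ * w = 1 := by
      refine hreg _ (mul_mem (inv_mem (mul_mem (M_mono Set.inter_subset_left hb)
        (M_mono hAS ha))) hw) Φ₀ ?_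
      rw [Equiv.Perm.mul_apply]
      exact Equiv.Perm.inv_eq_iff_eq.2 h
    exact (inv_mul_eq_one.1 h1).symm
  have hstep : ∀ i : ℤ, ∀ w, (∃ a ∈ P.M SA, ∃ b ∈ P.M SB, w = b * a) →
      ∃ a ∈ P.M SA, ∃ b ∈ P.M SB, w * P.r i = b * a := by
    rintro i _ ⟨a, ha, b, hb, rfl⟩
    by_cases hi : 0 ≤ i ∧ i < (n : ℤ)
    · rcases hcover i hi.1 hi.2 with h | ⟨h, h'⟩ | ⟨h, h'⟩
      · exact ⟨a * P.r i, mul_mem ha (r_mem h), b, hb, mul_assoc _ _ _⟩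
      · obtain ⟨a', ha', b', hb', he⟩ := hS2 (a * P.r i) (mul_mem (M_mono hAS ha) (r_mem h))
        exact ⟨a', ha', b * b', mul_mem hb hb', by rw [mul_assoc, he, mul_assoc]⟩
      · have hcom : a * P.r i = P.r i * a :=
          M_comm (S := SA) (T := {i}) (by rintro j hj k rfl; exact h' j hj) ha (r_mem rfl)
        exact ⟨a, ha, b * P.r i, mul_mem hb (r_mem h), by rw [mul_assoc, hcom, mul_assoc]⟩
    · rw [r_out hi, mul_one]
      exact ⟨a, ha, b, hb, rfl⟩
  have hall : ∀ w ∈ P.M Set.univ, ∃ a ∈ P.M SA, ∃ b ∈ P.M SB, w = b * a := by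
    intro w hw
    refine Subgroup.closure_induction_right
      (p := fun w _ => ∃ a ∈ P.M SA, ∃ b ∈ P.M SB, w = b * a) ?_ ?_ ?_ hw
    · exact ⟨1, one_mem _, 1, one_mem _, rfl⟩
    · rintro x _ _ ⟨i, -, rfl⟩ h
      exact hstep i x h
    · rintro x _ _ ⟨i, -, rfl⟩ h
      rw [r_inv]
      exact hstep i x h
  refine hch.contra he0 he1 fun Φ w hw hfix => ?_
  obtain ⟨a, ha, b, hb, rfl⟩ := hall w hw
  obtain ⟨c, hc, hac⟩ := hint a ha b⁻¹ (inv_mem hb) Φ (by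
    rw [Equiv.Perm.eq_inv_iff_eq]
    exact hfix)
  have h1 : c⁻¹ * a = 1 := by
    refine hreg _ (mul_mem (inv_mem (M_mono hCS hc)) (M_mono hAS ha)) Φ ?_
    rw [Equiv.Perm.mul_apply]
    exact Equiv.Perm.inv_eq_iff_eq.2 hac
  have h2 : a = c := (inv_mul_eq_one.1 h1).symm
  subst h2
  have hcom : (b * a) * P.r e = P.r e * (b * a) :=
    M_comm (S := SB) (T := {e}) (by rintro i hi j rfl; exact hB i hi)
      (mul_mem hb (M_mono hCB hc)) (r_mem rfl)
  rw [← Equiv.Perm.mul_apply, hcom, Equiv.Perm.mul_apply, hfix]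

theorem flat_eq {k : ℤ} (hn : 0 ≤ k ∧ k < n) (hfl : P.IsKMFlat k k) (Φ : Flag P.Face) :
    False := by
  refine (r_adj hn.1 hn.2 Φ).1 (P.eq_of_comparable (hfl _ _ ?_ ?_) ?_)
  · exact fc_rank _ (by omega) (by omega)
  · exact fc_rank _ (by omega) (by omega)
  · rw [fc_rank _ (by omega) (by omega), fc_rank _ (by omega) (by omega)]

theorem IsChiral.not_flat_one (hch : P.IsChiral) : ¬ P.IsKMFlat 1 ((n : ℤ) - 3) := by
  intro hfl
  have h3 := hch.three_le
  obtain ⟨Φ₀, -⟩ := id hch.1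
  rcases eq_or_ne n 4 with h4 | h4
  · rw [show (n : ℤ) - 3 = 1 by omega] at hfl
    exact flat_eq (by omega) hfl Φ₀
  rcases eq_or_ne n 3 with h5 | h5
  · -- only two vertices
    have hle : ∀ Φ Ψ : Flag P.Face, P.fc Φ 0 < P.fc Ψ 1 := by
      intro Φ Ψ
      have hr0 := fc_rank Φ (j := 0) (by omega) (by omega)
      have hr1 := fc_rank Ψ (j := 1) (by omega) (by omega)
      refine lt_of_le_of_ne (P.le_of_comparable (hfl _ _ hr1 (by rw [hr0]; omega)).symm
        (by omega)) fun h => ?_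
      rw [h] at hr0
      omega
    have two : ∀ Φ Ψ Θ : Flag P.Face, P.fc Φ 0 ≠ P.fc Θ 0 → P.fc Ψ 0 ≠ P.fc Θ 0 →
        P.fc Φ 0 = P.fc Ψ 0 := by
      intro Φ Ψ Θ h1 h2
      have hb : ∀ Λ : Flag P.Face, P.fc Θ (-1) < P.fc Λ 0 := by
        intro Λ
        rw [fc_neg_one Θ Λ le_rfl]
        exact fc_lt Λ le_rfl (by omega) (by omega)
      refine diamond_unique (F := P.fc Θ (-1)) (G := P.fc Θ 1) ?_ ⟨hb Θ, hle _ _⟩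
        ⟨hb Φ, hle _ _⟩ ⟨hb Ψ, hle _ _⟩ h1 h2
      rw [fc_rank Θ (by omega) (by omega), fc_rank Θ (by omega) (by omega)]
      norm_num
    refine hch.contra_central (e := 0) le_rfl (by omega) fun i hi0 hi1 Φ => ?_
    have hi : i = 0 ∨ i = 1 ∨ i = 2 := by omega
    rcases hi with rfl | rfl | rfl
    · rfl
    · refine eq_r (by omega) (by omega) ⟨?_, fun k hk => ?_⟩
      · rw [fc_r_ne (i := 0) (by omega), fc_r_ne (i := 0) (by omega)]
        exact (r_adj (by omega) (by omega) Φ).1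
      · by_cases hk0 : k = 0
        · subst hk0
          refine two _ _ Φ ?_ (r_adj (by omega) (by omega) Φ).1
          have := (r_adj (i := 0) (by omega) (by omega) (P.r 1 Φ)).1
          rwa [fc_r_ne (i := 1) (by omega)] at this
        · rw [fc_r_ne hk0, fc_r_ne hk, fc_r_ne hk0]
    · exact congrArg (fun u : Equiv.Perm (Flag P.Face) => u Φ)
        (r_comm (P := P) (i := 0) (j := 2) (by omega)).eq
  have h6 : 5 ≤ n := by omega
  refine hch.core (e := 0) (e' := (n : ℤ) - 1) (by omega) (by omega) (by omega) (by omega)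
    (Set.Ioo (-1) ((n : ℤ) - 2)) (Set.Ioo (-1) ((n : ℤ) - 3)) (Set.Ioo 1 (n : ℤ))
    (Set.Ioo 1 ((n : ℤ) - 3)) ?_ ?_ ?_ ?_ ?_ ?_ ?_ ?_
  · rintro i ⟨h1, h2⟩; exact ⟨by omega, by omega⟩
  · rintro i ⟨h1, h2⟩; exact ⟨by omega, by omega⟩
  · rintro i ⟨h1, h2⟩; exact ⟨by omega, by omega⟩
  · rintro i ⟨h1, h2⟩; omega
  · rintro i ⟨h1, h2⟩; omega
  · intro i h1 h2
    rcases lt_or_ge i ((n : ℤ) - 3) with h | h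
    · exact Or.inl ⟨by omega, h⟩
    rcases lt_or_ge i ((n : ℤ) - 2) with h' | h'
    · exact Or.inr (Or.inl ⟨⟨by omega, by omega⟩, ⟨by omega, by omega⟩⟩)
    · refine Or.inr (Or.inr ⟨⟨by omega, by omega⟩, ?_⟩)
      rintro j ⟨h3, h4⟩; omega
  · intro w hw Φ
    have hle : P.fc (w Φ) 1 ≤ P.fc Φ ((n : ℤ) - 3) := by
      have hr1 := fc_rank (w Φ) (j := 1) (by omega) (by omega)
      have hr2 := fc_rank Φ (j := (n : ℤ) - 3) (by omega) (by omega)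
      exact P.le_of_comparable (hfl _ _ hr1 hr2) (by omega)
    obtain ⟨Θ, hV, hE, hΘ⟩ := exists_flag_two (Φ := Φ) (i := -1) (j := (n : ℤ) - 3)
      (A := P.fc (w Φ) 0) (B := P.fc (w Φ) 1) le_rfl (by omega) (by omega)
      (by rw [fc_neg_one Φ (w Φ) le_rfl]; exact fc_mono _ le_rfl (by omega) (by omega))
      hle (fc_mono _ (by omega) (by omega) (by omega))
    have hV' := fc_of_mem' hV (fc_rank (w Φ) (j := 0) (by omega) (by omega))
    have hE' := fc_of_mem' hE (fc_rank (w Φ) (j := 1) (by omega) (by omega))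
    obtain ⟨a, ha, rfl⟩ := conn_Ioo (i := -1) (j := (n : ℤ) - 3) (Φ := Φ) (Ψ := Θ) le_rfl
      (by omega) fun k hk => (hΘ k hk).symm
    obtain ⟨b, hb, hab⟩ := conn_Ioo (i := 1) (j := (n : ℤ) - 2) (Φ := a Φ) (Ψ := w Φ) (by omega)
      (by omega) (by
        rintro k (hk | hk)
        · rcases le_or_gt k (-1) with hk' | hk'
          · exact fc_neg_one _ _ hk'
          · have hk2 : k = 0 ∨ k = 1 := by omega
            rcases hk2 with rfl | rfl
            · exact hV'
            · exact hE'
        · rw [hΘ k (Or.inr (by omega)), M_fc (by rintro ⟨_, _⟩; omega) hw])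
    refine ⟨a, ha, b, M_mono ?_ hb, hab.symm⟩
    rintro i ⟨h1, h2⟩
    exact ⟨⟨by omega, by omega⟩, ⟨by omega, by omega⟩⟩
  · intro a ha b hb Φ hab
    obtain ⟨c, hc, hcc⟩ := conn_Ioo (i := 1) (j := (n : ℤ) - 3) (Φ := Φ) (Ψ := a Φ) (by omega)
      (by omega) (by
        rintro k (hk | hk)
        · rw [hab, M_fc (by rintro ⟨_, _⟩; omega) hb]
        · rw [M_fc (by rintro ⟨_, _⟩; omega) ha])
    exact ⟨c, hc, hcc.symm⟩

theorem IsChiral.not_flat_two (hch : P.IsChiral) : ¬ P.IsKMFlat 2 ((n : ℤ) - 2) := by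
  intro hfl
  have h3 := hch.three_le
  obtain ⟨Φ₀, -⟩ := id hch.1
  rcases eq_or_ne n 4 with h4 | h4
  · rw [show (n : ℤ) - 2 = 2 by omega] at hfl
    exact flat_eq (by omega) hfl Φ₀
  rcases eq_or_ne n 3 with h5 | h5
  · -- only two facets
    have hle : ∀ Φ Ψ : Flag P.Face, P.fc Φ 1 < P.fc Ψ 2 := by
      intro Φ Ψ
      have hr0 := fc_rank Φ (j := 1) (by omega) (by omega)
      have hr1 := fc_rank Ψ (j := 2) (by omega) (by omega)
      refine lt_of_le_of_ne (P.le_of_comparable (hfl _ _ hr1 (by rw [hr0]; omega)).symm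
        (by omega)) fun h => ?_
      rw [h] at hr0
      omega
    have two : ∀ Φ Ψ Θ : Flag P.Face, P.fc Φ 2 ≠ P.fc Θ 2 → P.fc Ψ 2 ≠ P.fc Θ 2 →
        P.fc Φ 2 = P.fc Ψ 2 := by
      intro Φ Ψ Θ h1 h2
      have hb : ∀ Λ : Flag P.Face, P.fc Λ 2 < P.fc Θ 3 := by
        intro Λ
        rw [fc_top Θ Λ (by omega)]
        exact fc_lt Λ (by omega) (by omega) (by omega)
      refine diamond_unique (F := P.fc Θ 1) (G := P.fc Θ 3) ?_ ⟨hle _ _, hb Θ⟩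
        ⟨hle _ _, hb Φ⟩ ⟨hle _ _, hb Ψ⟩ h1 h2
      rw [fc_rank Θ (by omega) (by omega), fc_rank Θ (by omega) (by omega)]
      norm_num
    refine hch.contra_central (e := 2) (by omega) (by omega) fun i hi0 hi1 Φ => ?_
    have hi : i = 0 ∨ i = 1 ∨ i = 2 := by omega
    rcases hi with rfl | rfl | rfl
    · exact congrArg (fun u : Equiv.Perm (Flag P.Face) => u Φ)
        (r_comm (P := P) (i := 2) (j := 0) (by omega)).eq
    · refine eq_r (by omega) (by omega) ⟨?_, fun k hk => ?_⟩
      · rw [fc_r_ne (i := 2) (by omega), fc_r_ne (i := 2) (by omega)]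
        exact (r_adj (by omega) (by omega) Φ).1
      · by_cases hk0 : k = 2
        · subst hk0
          refine two _ _ Φ ?_ (r_adj (by omega) (by omega) Φ).1
          have := (r_adj (i := 2) (by omega) (by omega) (P.r 1 Φ)).1
          rwa [fc_r_ne (i := 1) (by omega)] at this
        · rw [fc_r_ne hk0, fc_r_ne hk, fc_r_ne hk0]
    · rfl
  have h6 : 5 ≤ n := by omega
  refine hch.core (e := (n : ℤ) - 1) (e' := 0) (by omega) (by omega) (by omega) (by omega)
    (Set.Ioo 1 (n : ℤ)) (Set.Ioo 2 (n : ℤ)) (Set.Ioo (-1) ((n : ℤ) - 2))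
    (Set.Ioo 2 ((n : ℤ) - 2)) ?_ ?_ ?_ ?_ ?_ ?_ ?_ ?_
  · rintro i ⟨h1, h2⟩; exact ⟨by omega, by omega⟩
  · rintro i ⟨h1, h2⟩; exact ⟨by omega, by omega⟩
  · rintro i ⟨h1, h2⟩; exact ⟨by omega, by omega⟩
  · rintro i ⟨h1, h2⟩; omega
  · rintro i ⟨h1, h2⟩; omega
  · intro i h1 h2
    rcases lt_or_ge 2 i with h | h
    · exact Or.inl ⟨by omega, h2⟩
    rcases lt_or_ge 1 i with h' | h'
    · exact Or.inr (Or.inl ⟨⟨by omega, by omega⟩, ⟨by omega, by omega⟩⟩)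
    · refine Or.inr (Or.inr ⟨⟨by omega, by omega⟩, ?_⟩)
      rintro j ⟨h3, h4⟩; omega
  · intro w hw Φ
    have hle : P.fc Φ 2 ≤ P.fc (w Φ) ((n : ℤ) - 2) := by
      have hr1 := fc_rank Φ (j := 2) (by omega) (by omega)
      have hr2 := fc_rank (w Φ) (j := (n : ℤ) - 2) (by omega) (by omega)
      exact P.le_of_comparable (hfl _ _ hr1 hr2) (by omega)
    obtain ⟨Θ, hV, hE, hΘ⟩ := exists_flag_two (Φ := Φ) (i := 2) (j := (n : ℤ))
      (A := P.fc (w Φ) ((n : ℤ) - 2)) (B := P.fc (w Φ) ((n : ℤ) - 1)) (by omega) (by omega)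
      le_rfl hle
      (by rw [fc_top Φ (w Φ) le_rfl]; exact fc_mono _ (by omega) (by omega) le_rfl)
      (fc_mono _ (by omega) (by omega) (by omega))
    have hV' := fc_of_mem' hV (fc_rank (w Φ) (j := (n : ℤ) - 2) (by omega) (by omega))
    have hE' := fc_of_mem' hE (fc_rank (w Φ) (j := (n : ℤ) - 1) (by omega) (by omega))
    obtain ⟨a, ha, rfl⟩ := conn_Ioo (i := 2) (j := (n : ℤ)) (Φ := Φ) (Ψ := Θ) (by omega)
      le_rfl fun k hk => (hΘ k hk).symm
    obtain ⟨b, hb, hab⟩ := conn_Ioo (i := 1) (j := (n : ℤ) - 2) (Φ := a Φ) (Ψ := w Φ) (by omega)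
      (by omega) (by
        rintro k (hk | hk)
        · rw [hΘ k (Or.inl (by omega)), M_fc (by rintro ⟨_, _⟩; omega) hw]
        · rcases le_or_gt (n : ℤ) k with hk' | hk'
          · exact fc_top _ _ hk'
          · have hk2 : k = (n : ℤ) - 2 ∨ k = (n : ℤ) - 1 := by omega
            rcases hk2 with rfl | rfl
            · exact hV'
            · exact hE')
    refine ⟨a, ha, b, M_mono ?_ hb, hab.symm⟩
    rintro i ⟨h1, h2⟩
    exact ⟨⟨by omega, by omega⟩, ⟨by omega, by omega⟩⟩
  · intro a ha b hb Φ hab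
    obtain ⟨c, hc, hcc⟩ := conn_Ioo (i := 2) (j := (n : ℤ) - 2) (Φ := Φ) (Ψ := a Φ) (by omega)
      (by omega) (by
        rintro k (hk | hk)
        · rw [M_fc (by rintro ⟨_, _⟩; omega) ha]
        · rw [hab, M_fc (by rintro ⟨_, _⟩; omega) hb])
    exact ⟨c, hc, hcc.symm⟩

end Chiral

end AbstractPolytope

/-- There are no finite chiral `n`-polytopes that are
`(1, n-3)`-flat, and there are no finite chiral `n`-polytopes that are
`(2, n-2)`-flat. -/
theorem chiral_flatness_restriction
    (n : ℕ) (P : AbstractPolytope n) (hfin : Finite P.Face)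
    (hchiral : P.IsChiral) :
    ¬ P.IsKMFlat 1 ((n : ℤ) - 3) ∧ ¬ P.IsKMFlat 2 ((n : ℤ) - 2) := by
  exact ⟨hchiral.not_flat_one, hchiral.not_flat_two⟩
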